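/- Let n ≥ 1, let Λ be a full-rank lattice in ℝⁿ, let α, α', β, β' > 0 be reals, let c be a nonzero real, and let p be a natural number with 1 ≤ p ≤ n−1 and n ≠ 2p. Then Spec(Λ,α,β,p) = Spec(cΛ,α',β',p) (as functions ℝ → ℕ) if and only if α' = c²α and β' = c²β, where cΛ := {c·w : w ∈ Λ} is the rescaled lattice. -/

import Mathlib

open Real
open scoped RealInnerProductSpace

/-- The dual lattice `Λ* = {v : ∀ w ∈ Λ, ⟨v,w⟩ ∈ ℤ}` of a lattice `Λ ⊆ ℝⁿ`. -/
def dualLattice {n : ℕ} (L : Submodule ℤ (EuclideanSpace ℝ (Fin n))) :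
    Set (EuclideanSpace ℝ (Fin n)) :=
  {v | ∀ w ∈ L, ∃ m : ℤ, ⟪v, w⟫ = (m : ℝ)}

/-- The spectrum, with multiplicities, of the generalized Hodge-Laplace operator
`F_{αβ} = α dδ + β δd` on `p`-forms on the flat torus `ℝⁿ/Λ` (Theorem 3.9):
`x ↦ C(n-1,p-1)·#{l ∈ Λ* : 4π²α‖l‖² = x} + C(n-1,p)·#{l ∈ Λ* : 4π²β‖l‖² = x}`. -/
noncomputable def torusSpec {n : ℕ} (L : Submodule ℤ (EuclideanSpace ℝ (Fin n)))
    (α β : ℝ) (p : ℕ) : ℝ → ℕ := fun x =>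
  (n - 1).choose (p - 1) *
      Nat.card {l : EuclideanSpace ℝ (Fin n) //
        l ∈ dualLattice L ∧ 4 * π ^ 2 * α * ‖l‖ ^ 2 = x} +
    (n - 1).choose p *
      Nat.card {l : EuclideanSpace ℝ (Fin n) //
        l ∈ dualLattice L ∧ 4 * π ^ 2 * β * ‖l‖ ^ 2 = x}

/-- The rescaled lattice `cΛ = {c·w : w ∈ Λ}`. -/
noncomputable def rescaleLattice {n : ℕ} (c : ℝ) (L : Submodule ℤ (EuclideanSpace ℝ (Fin n))) :
    Submodule ℤ (EuclideanSpace ℝ (Fin n)) :=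
  L.map ((c • (LinearMap.id : EuclideanSpace ℝ (Fin n) →ₗ[ℝ]
    EuclideanSpace ℝ (Fin n))).restrictScalars ℤ)

/-- Uniqueness of the two scaling factors, for an abstract counting function. -/
theorem abstract_unique (N : ℝ → ℕ) (m : ℝ) (hm : 0 < m) (hNm : 0 < N m)
    (hN : ∀ t, 0 < t → t < m → N t = 0) (A B : ℕ) (hA : 0 < A) (hB : 0 < B) (hAB : A ≠ B)
    (a b a' b' : ℝ) (ha : 0 < a) (hb : 0 < b) (ha' : 0 < a') (hb' : 0 < b')
    (h : ∀ x, A * N (x / a) + B * N (x / b) = A * N (x / a') + B * N (x / b')) :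
    a' = a ∧ b' = b := by
  have h0 : ∀ s t : ℝ, 0 < s → s < t → N (m * s / t) = 0 := by
    intro s t hs hst
    have ht : 0 < t := hs.trans hst
    apply hN _ (by positivity)
    rw [div_lt_iff₀ ht]
    exact mul_lt_mul_of_pos_left hst hm
  have h1 : ∀ t : ℝ, 0 < t → N (m * t / t) = N m := by
    intro t ht
    rw [mul_div_assoc, div_self ht.ne', mul_one]
  have hmin : ∀ a b a' b' : ℝ, 0 < a → 0 < b → 0 < a' → 0 < b' →
      (∀ x, A * N (x / a) + B * N (x / b) = A * N (x / a') + B * N (x / b')) →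
      min a b ≤ min a' b' := by
    intro a b a' b' ha hb ha' hb' h
    by_contra! hlt
    obtain ⟨hla, hlb⟩ := lt_min_iff.1 hlt
    have hs : 0 < min a' b' := lt_min ha' hb'
    have e := h (m * min a' b')
    rw [h0 _ _ hs hla, h0 _ _ hs hlb] at e
    have hAk := Nat.mul_pos hA hNm
    have hBk := Nat.mul_pos hB hNm
    rcases min_choice a' b' with hc | hc <;> rw [hc] at e
    · rw [h1 _ ha'] at e; omega
    · rw [h1 _ hb'] at e; omega
  have hmm : min a b = min a' b' :=
    le_antisymm (hmin _ _ _ _ ha hb ha' hb' h)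
      (hmin _ _ _ _ ha' hb' ha hb (fun x => (h x).symm))
  have hsingle : ∀ D : ℕ, 0 < D → ∀ b b' : ℝ, 0 < b → 0 < b' →
      (∀ x, D * N (x / b) = D * N (x / b')) → b' = b := by
    intro D hD b b' hb hb' h
    rcases lt_trichotomy b b' with hl | hl | hl
    · have e := h (m * b)
      rw [h1 _ hb, h0 _ _ hb hl] at e
      have := Nat.mul_pos hD hNm
      omega
    · exact hl.symm
    · have e := h (m * b')
      rw [h1 _ hb', h0 _ _ hb' hl] at e
      have := Nat.mul_pos hD hNm
      omega
  have hAk := Nat.mul_pos hA hNm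
  have hBk := Nat.mul_pos hB hNm
  have hne : A * N m ≠ B * N m := fun e => hAB (Nat.eq_of_mul_eq_mul_right hNm e)
  have e := h (m * min a b)
  rcases lt_trichotomy a b with hl | hl | hl <;>
  rcases lt_trichotomy a' b' with hl' | hl' | hl'
  · rw [min_eq_left hl.le, min_eq_left hl'.le] at hmm
    subst hmm
    exact ⟨rfl, hsingle B hB _ _ hb hb' (fun x => by have := h x; omega)⟩
  · rw [min_eq_left hl.le, min_eq_left hl'.le] at hmm
    subst hmm; subst hl'
    rw [min_eq_left hl.le, h1 _ ha, h0 _ _ ha hl] at e; omega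
  · rw [min_eq_left hl.le, min_eq_right hl'.le] at hmm
    subst hmm
    rw [min_eq_left hl.le, h1 _ ha, h0 _ _ ha hl, h0 _ _ ha hl'] at e; omega
  · rw [min_eq_left hl.le, min_eq_left hl'.le] at hmm
    subst hmm; subst hl
    rw [min_self, h1 _ ha, h0 _ _ ha hl'] at e; omega
  · rw [min_eq_left hl.le, min_eq_left hl'.le] at hmm
    exact ⟨hmm.symm, by rw [← hl', ← hl, hmm]⟩
  · rw [min_eq_left hl.le, min_eq_right hl'.le] at hmm
    subst hmm; subst hl
    rw [min_self, h1 _ ha, h0 _ _ ha hl'] at e; omega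
  · rw [min_eq_right hl.le, min_eq_left hl'.le] at hmm
    subst hmm
    rw [min_eq_right hl.le, h1 _ hb, h0 _ _ hb hl, h0 _ _ hb hl'] at e; omega
  · rw [min_eq_right hl.le, min_eq_left hl'.le] at hmm
    subst hmm; subst hl'
    rw [min_eq_right hl.le, h1 _ hb, h0 _ _ hb hl] at e; omega
  · rw [min_eq_right hl.le, min_eq_right hl'.le] at hmm
    subst hmm
    exact ⟨hsingle A hA _ _ ha ha' (fun x => by have := h x; omega), rfl⟩

theorem dual_ball_finite {n : ℕ} (L : Submodule ℤ (EuclideanSpace ℝ (Fin n)))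
    [DiscreteTopology L] [IsZLattice ℝ L] (R : ℝ) :
    {l | l ∈ dualLattice L ∧ ‖l‖ ≤ R}.Finite := by
  classical
  have : Module.Free ℤ L := ZLattice.module_free ℝ L
  have : Module.Finite ℤ L := ZLattice.module_finite ℝ L
  let b := Module.Free.chooseBasis ℤ L
  let B := b.ofZLatticeBasis ℝ L
  let g : EuclideanSpace ℝ (Fin n) → (Module.Free.ChooseBasisIndex ℤ L → ℤ) :=
    fun l i => ⌊⟪l, B i⟫⌋
  have hB : ∀ i, B i = (b i : EuclideanSpace ℝ (Fin n)) := fun i => b.ofZLatticeBasis_apply ℝ L i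
  have hg : ∀ l ∈ dualLattice L, ∀ i, ((g l i : ℤ) : ℝ) = ⟪l, B i⟫ := by
    intro l hl i
    obtain ⟨k, hk⟩ := hl (b i) (b i).2
    simp only [g, hB, hk, Int.floor_intCast]
  have hfin : (Set.pi Set.univ (fun i => Set.Icc (-⌈R * ‖B i‖⌉) ⌈R * ‖B i‖⌉)).Finite :=
    Set.Finite.pi' (fun i => Set.finite_Icc _ _) |>.subset (by intro x hx i; exact hx i trivial)
  refine Set.Finite.of_finite_image (f := g) (hfin.subset ?_) ?_
  · rintro _ ⟨l, ⟨hl, hR⟩, rfl⟩ i -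
    have h1 : |⟪l, B i⟫| ≤ R * ‖B i‖ :=
      (abs_real_inner_le_norm _ _).trans (by gcongr)
    rw [← hg l hl i] at h1
    have h2 := (abs_le.1 (h1.trans (Int.le_ceil _)))
    exact ⟨by exact_mod_cast h2.1, by exact_mod_cast h2.2⟩
  · rintro l ⟨hl, -⟩ l' ⟨hl', -⟩ he
    refine InnerProductSpace.ext_inner_right_basis B ?_
    intro i
    rw [← hg l hl i, ← hg l' hl' i, he]

theorem dual_exists_ne {n : ℕ} (hn : 1 ≤ n) (L : Submodule ℤ (EuclideanSpace ℝ (Fin n)))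
    [DiscreteTopology L] [IsZLattice ℝ L] : ∃ l ∈ dualLattice L, l ≠ 0 := by
  classical
  have : Module.Free ℤ L := ZLattice.module_free ℝ L
  have : Module.Finite ℤ L := ZLattice.module_finite ℝ L
  let b := Module.Free.chooseBasis ℤ L
  let B := b.ofZLatticeBasis ℝ L
  have hne : Nonempty (Module.Free.ChooseBasisIndex ℤ L) := by
    by_contra hc
    rw [not_nonempty_iff] at hc
    have h1 := Module.finrank_eq_card_basis B
    simp at h1
    omega
  obtain ⟨i⟩ := hne
  let v := (InnerProductSpace.toDual ℝ (EuclideanSpace ℝ (Fin n))).symm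
    (LinearMap.toContinuousLinearMap (B.coord i))
  have hv : ∀ w, ⟪v, w⟫ = B.coord i w := by
    intro w
    simp [v, InnerProductSpace.toDual_symm_apply]
  refine ⟨v, ?_, ?_⟩
  · intro w hw
    refine ⟨b.repr ⟨w, hw⟩ i, ?_⟩
    rw [hv]
    exact b.ofZLatticeBasis_repr_apply ℝ L ⟨w, hw⟩ i
  · intro h
    have := hv (B i)
    rw [h] at this
    simp at this

/-- The counting function of the lengths of dual vectors. -/
noncomputable def dualCount {n : ℕ} (L : Submodule ℤ (EuclideanSpace ℝ (Fin n))) (t : ℝ) : ℕ :=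
  Nat.card {l : EuclideanSpace ℝ (Fin n) // l ∈ dualLattice L ∧ 4 * π ^ 2 * ‖l‖ ^ 2 = t}

theorem dualCount_min {n : ℕ} (hn : 1 ≤ n) (L : Submodule ℤ (EuclideanSpace ℝ (Fin n)))
    [DiscreteTopology L] [IsZLattice ℝ L] :
    ∃ m : ℝ, 0 < m ∧ 0 < dualCount L m ∧ ∀ t, 0 < t → t < m → dualCount L t = 0 := by
  obtain ⟨v, hv, hv0⟩ := dual_exists_ne hn L
  have hfin : {l | (l ∈ dualLattice L ∧ ‖l‖ ≤ ‖v‖) ∧ l ≠ 0}.Finite :=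
    (dual_ball_finite L ‖v‖).subset (fun l hl => hl.1)
  obtain ⟨u, ⟨⟨hu, huv⟩, hu0⟩, hmin⟩ :=
    Set.exists_min_image _ (fun l => ‖l‖) hfin ⟨v, ⟨hv, le_rfl⟩, hv0⟩
  have hun : 0 < ‖u‖ := norm_pos_iff.2 hu0
  refine ⟨4 * π ^ 2 * ‖u‖ ^ 2, by positivity, ?_, ?_⟩
  · have hf : Finite {l : EuclideanSpace ℝ (Fin n) //
        l ∈ dualLattice L ∧ 4 * π ^ 2 * ‖l‖ ^ 2 = 4 * π ^ 2 * ‖u‖ ^ 2} := by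
      refine ((dual_ball_finite L ‖u‖).subset ?_).to_subtype
      rintro l ⟨hl, he⟩
      refine ⟨hl, ?_⟩
      have := mul_left_cancel₀ (by positivity) he
      exact (pow_le_pow_iff_left₀ (norm_nonneg _) (norm_nonneg _) two_ne_zero).1 this.le
    have hn : Nonempty {l : EuclideanSpace ℝ (Fin n) //
        l ∈ dualLattice L ∧ 4 * π ^ 2 * ‖l‖ ^ 2 = 4 * π ^ 2 * ‖u‖ ^ 2} := ⟨⟨u, hu, rfl⟩⟩
    exact Nat.card_pos
  · intro t ht htm
    have : IsEmpty {l : EuclideanSpace ℝ (Fin n) //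
        l ∈ dualLattice L ∧ 4 * π ^ 2 * ‖l‖ ^ 2 = t} := by
      refine ⟨?_⟩
      rintro ⟨l, hl, rfl⟩
      have h1 : ‖l‖ < ‖u‖ := by
        have := lt_of_mul_lt_mul_left htm (by positivity)
        exact (pow_lt_pow_iff_left₀ (norm_nonneg _) (norm_nonneg _) two_ne_zero).1 this
      have h2 : l ≠ 0 := by
        rintro rfl
        simp at ht
      exact absurd (hmin l ⟨⟨hl, h1.le.trans huv⟩, h2⟩) (not_le.2 h1)
    exact Nat.card_of_isEmpty

theorem card_eq {n : ℕ} (L : Submodule ℤ (EuclideanSpace ℝ (Fin n))) (a : ℝ) (ha : 0 < a)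
    (x : ℝ) :
    Nat.card {l : EuclideanSpace ℝ (Fin n) // l ∈ dualLattice L ∧ 4 * π ^ 2 * a * ‖l‖ ^ 2 = x} =
      dualCount L (x / a) := by
  refine Nat.card_congr (Equiv.subtypeEquivRight fun l => and_congr_right fun _ => ?_)
  rw [eq_div_iff ha.ne']
  constructor <;> intro h <;> rw [← h] <;> ring

theorem mem_dual_rescale {n : ℕ} (L : Submodule ℤ (EuclideanSpace ℝ (Fin n))) (c : ℝ)
    (l : EuclideanSpace ℝ (Fin n)) :
    l ∈ dualLattice (rescaleLattice c L) ↔ c • l ∈ dualLattice L := by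
  simp only [dualLattice, rescaleLattice, Set.mem_setOf_eq, Submodule.mem_map]
  constructor
  · intro h w hw
    obtain ⟨k, hk⟩ := h (c • w) ⟨w, hw, rfl⟩
    exact ⟨k, by rw [← hk, real_inner_smul_left, real_inner_smul_right]⟩
  · rintro h _ ⟨w, hw, rfl⟩
    obtain ⟨k, hk⟩ := h w hw
    refine ⟨k, ?_⟩
    rw [← hk, real_inner_smul_left]
    exact real_inner_smul_right _ _ _

theorem card_rescale {n : ℕ} (L : Submodule ℤ (EuclideanSpace ℝ (Fin n))) (c : ℝ) (hc : c ≠ 0)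
    (a : ℝ) (ha : 0 < a) (x : ℝ) :
    Nat.card {l : EuclideanSpace ℝ (Fin n) //
        l ∈ dualLattice (rescaleLattice c L) ∧ 4 * π ^ 2 * a * ‖l‖ ^ 2 = x} =
      dualCount L (x / (a / c ^ 2)) := by
  rw [← card_eq L (a / c ^ 2) (by positivity)]
  refine Nat.card_congr ((LinearEquiv.smulOfNeZero ℝ (EuclideanSpace ℝ (Fin n)) c hc).toEquiv.subtypeEquiv fun l => ?_)
  rw [mem_dual_rescale]
  refine and_congr_right fun _ => ?_
  have : 4 * π ^ 2 * (a / c ^ 2) * ‖c • l‖ ^ 2 = 4 * π ^ 2 * a * ‖l‖ ^ 2 := by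
    rw [norm_smul, mul_pow, Real.norm_eq_abs, sq_abs]
    field_simp
  exact Eq.congr_left this.symm

theorem choose_ne (n p : ℕ) (hp : 1 ≤ p) (hpn : p ≤ n - 1) (hn2p : n ≠ 2 * p) :
    (n - 1).choose (p - 1) ≠ (n - 1).choose p := by
  obtain ⟨q, rfl⟩ := Nat.exists_eq_add_of_le' hp
  intro h
  simp only [Nat.add_sub_cancel] at h
  have h1 := Nat.choose_succ_right_eq (n - 1) q
  rw [← h] at h1
  have h2 : 0 < (n - 1).choose q := Nat.choose_pos (by omega)
  have := Nat.eq_of_mul_eq_mul_left h2 h1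
  omega

/-- Corollary 3.19 (case `n ≠ 2p`): `F_{αβ,p}` on `ℝⁿ/Λ` and `F_{α'β',p}` on `ℝⁿ/cΛ` are
isospectral iff `(α', β') = (c²α, c²β)`. -/
theorem stmt_10 (n : ℕ) (hn : 1 ≤ n)
    (L : Submodule ℤ (EuclideanSpace ℝ (Fin n)))
    [DiscreteTopology L] [IsZLattice ℝ L]
    (α α' β β' : ℝ) (hα : 0 < α) (hα' : 0 < α') (hβ : 0 < β) (hβ' : 0 < β')
    (c : ℝ) (hc : c ≠ 0)
    (p : ℕ) (hp : 1 ≤ p) (hpn : p ≤ n - 1) (hn2p : n ≠ 2 * p) :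
    torusSpec L α β p = torusSpec (rescaleLattice c L) α' β' p ↔
      α' = c ^ 2 * α ∧ β' = c ^ 2 * β := by
  have hspec : torusSpec L α β p = torusSpec (rescaleLattice c L) α' β' p ↔
      ∀ x, (n - 1).choose (p - 1) * dualCount L (x / α) +
          (n - 1).choose p * dualCount L (x / β) =
        (n - 1).choose (p - 1) * dualCount L (x / (α' / c ^ 2)) +
          (n - 1).choose p * dualCount L (x / (β' / c ^ 2)) := by
    rw [funext_iff]
    refine forall_congr' fun x => ?_
    simp only [torusSpec]
    rw [card_eq L α hα, card_eq L β hβ, card_rescale L c hc α' hα', card_rescale L c hc β' hβ']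
  rw [hspec]
  have hc2 : 0 < c ^ 2 := by positivity
  constructor
  · intro h
    obtain ⟨m, hm, hNm, hN⟩ := dualCount_min hn L
    obtain ⟨h1, h2⟩ := abstract_unique (dualCount L) m hm hNm hN _ _
      (Nat.choose_pos (by omega)) (Nat.choose_pos hpn) (choose_ne n p hp hpn hn2p)
      α β (α' / c ^ 2) (β' / c ^ 2) hα hβ (by positivity) (by positivity) h
    rw [div_eq_iff hc2.ne'] at h1 h2
    exact ⟨by rw [h1, mul_comm], by rw [h2, mul_comm]⟩
  · rintro ⟨rfl, rfl⟩ x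
    rw [mul_div_cancel_left₀ _ hc2.ne', mul_div_cancel_left₀ _ hc2.ne']
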